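/- arXiv:2110.14640 — 3 statements merged into one kernel-verified Lean document; each statement's English description precedes it below -/
import Mathlib

section
/- Let N ≥ 1 be an integer, Ω ⊂ ℝ^N a nonempty bounded open set, x₀ ∈ Ω, and a, b : ℝ^N → ℝ continuously differentiable on Ω. Suppose there exists z₀ ∈ Ω such that ã(z₀) + b̃(z₀) < 0. Then for every M ∈ ℝ there exist smooth functions u, v compactly supported in Ω with ∫_Ω u(x)v(x) dx > 0 and (1/4)∫_Ω (ã(x)|∇u(x)|² + b̃(x)|∇v(x)|²) dx < M ∫_Ω u(x)v(x) dx; in other words, the infimum of φ_{a,b}(u,v) over such pairs is −∞. -/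
open MeasureTheory Real Filter Topology

noncomputable section

theorem stmt_15
    (N : ℕ) (hN : 1 ≤ N)
    (Ω : Set (EuclideanSpace ℝ (Fin N)))
    (hΩo : IsOpen Ω) (hΩb : Bornology.IsBounded Ω) (hΩne : Ω.Nonempty)
    (x₀ : EuclideanSpace ℝ (Fin N)) (hx₀ : x₀ ∈ Ω)
    (a b : EuclideanSpace ℝ (Fin N) → ℝ)
    (ha : ContDiffOn ℝ 1 a Ω) (hb : ContDiffOn ℝ 1 b Ω)
    (z₀ : EuclideanSpace ℝ (Fin N)) (hz₀ : z₀ ∈ Ω)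
    (hneg : fderiv ℝ a z₀ (z₀ - x₀) + fderiv ℝ b z₀ (z₀ - x₀) < 0) :
    ∀ M : ℝ, ∃ u v : EuclideanSpace ℝ (Fin N) → ℝ,
      ContDiff ℝ (⊤ : ℕ∞) u ∧ HasCompactSupport u ∧ tsupport u ⊆ Ω ∧
      ContDiff ℝ (⊤ : ℕ∞) v ∧ HasCompactSupport v ∧ tsupport v ⊆ Ω ∧
      0 < (∫ x in Ω, u x * v x) ∧
      (1 / 4) * (∫ x in Ω,
          (fderiv ℝ a x (x - x₀) * ‖fderiv ℝ u x‖ ^ 2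
            + fderiv ℝ b x (x - x₀) * ‖fderiv ℝ v x‖ ^ 2))
        < M * ∫ x in Ω, u x * v x := by
  intro M
  have hfa := ha.continuousOn_fderiv_of_isOpen hΩo le_rfl
  have hfb := hb.continuousOn_fderiv_of_isOpen hΩo le_rfl
  have hid : ContinuousOn (fun x : EuclideanSpace ℝ (Fin N) => x - x₀) Ω :=
    (continuous_id.sub continuous_const).continuousOn
  set g : EuclideanSpace ℝ (Fin N) → ℝ :=
    fun x => fderiv ℝ a x (x - x₀) + fderiv ℝ b x (x - x₀) with hg
  have hgc : ContinuousOn g Ω := (hfa.clm_apply hid).add (hfb.clm_apply hid)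
  obtain ⟨c, hc0, hcz⟩ : ∃ c : ℝ, 0 < c ∧ g z₀ < -c :=
    ⟨-(g z₀) / 2, by simp only [hg]; linarith, by simp only [hg]; linarith⟩
  have hev : ∀ᶠ x in 𝓝 z₀, g x < -c ∧ x ∈ Ω :=
    ((hgc.continuousAt (hΩo.mem_nhds hz₀)).eventually_lt continuousAt_const hcz).and
      (hΩo.mem_nhds hz₀)
  obtain ⟨δ, hδ, hball⟩ := Metric.eventually_nhds_iff_ball.1 hev
  let η : ContDiffBump (0 : EuclideanSpace ℝ (Fin N)) := ⟨1/2, 1, by norm_num, by norm_num⟩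
  have hηs : ContDiff ℝ (⊤ : ℕ∞) (η : EuclideanSpace ℝ (Fin N) → ℝ) := η.contDiff
  have hηd : Differentiable ℝ (η : EuclideanSpace ℝ (Fin N) → ℝ) := hηs.differentiable (by simp)
  have hηc : Continuous (fderiv ℝ (η : EuclideanSpace ℝ (Fin N) → ℝ)) :=
    hηs.continuous_fderiv (by simp)
  have hηt : tsupport (η : EuclideanSpace ℝ (Fin N) → ℝ) = Metric.closedBall 0 1 :=
    η.tsupport_eq
  have hη0 : η 0 = 1 := η.one_of_mem_closedBall (by simp [η])
  set A : ℝ := ∫ x, η x * η x with hA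
  set B : ℝ := ∫ x, ‖fderiv ℝ (η : EuclideanSpace ℝ (Fin N) → ℝ) x‖ ^ 2 with hB
  have hApos : 0 < A := by
    refine Continuous.integral_pos_of_hasCompactSupport_nonneg_nonzero (x := 0)
      (hηs.continuous.mul hηs.continuous) (η.hasCompactSupport.mul_left)
      (fun x => mul_self_nonneg _) ?_
    simp [hη0]
  have hBpos : 0 < B := by
    obtain ⟨x, hx⟩ : ∃ x, fderiv ℝ (η : EuclideanSpace ℝ (Fin N) → ℝ) x ≠ 0 := by
      by_contra! h
      let e : EuclideanSpace ℝ (Fin N) := EuclideanSpace.single ⟨0, hN⟩ (2:ℝ)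
      have h1 := is_const_of_fderiv_eq_zero hηd h 0 e
      have h2 : η e = 0 := η.zero_of_le_dist (by simp [η, e])
      rw [hη0, h2] at h1
      exact one_ne_zero h1
    refine Continuous.integral_pos_of_hasCompactSupport_nonneg_nonzero (x := x)
      (hηc.norm.pow 2) ?_ (fun x => by positivity) (by simpa using hx)
    exact (η.hasCompactSupport.fderiv (𝕜 := ℝ)).comp_left
      (g := fun L : EuclideanSpace ℝ (Fin N) →L[ℝ] ℝ => ‖L‖ ^ 2) (by simp)
  obtain ⟨r, hr0, hrδ, hrM⟩ : ∃ r : ℝ, 0 < r ∧ r < δ ∧ -(c * B / 4) < M * A * r ^ 2 := by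
    have h1 : ∀ᶠ r in 𝓝 (0:ℝ), -(c * B / 4) < M * A * r ^ 2 := by
      have : ContinuousAt (fun r : ℝ => M * A * r ^ 2) 0 := by fun_prop
      refine continuousAt_const.eventually_lt this ?_
      have : 0 < c * B := by positivity
      simp; linarith
    have h2 : ∀ᶠ r in 𝓝[>] (0:ℝ), r < δ ∧ -(c * B / 4) < M * A * r ^ 2 :=
      nhdsWithin_le_nhds ((eventually_lt_nhds hδ).and h1)
    obtain ⟨r, h, h'⟩ := (h2.and self_mem_nhdsWithin).exists
    exact ⟨r, h', h.1, h.2⟩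
  set K := Metric.closedBall z₀ r with hK
  have hKc : IsCompact K := isCompact_closedBall _ _
  have hKb : ∀ x ∈ K, g x < -c ∧ x ∈ Ω := fun x hx =>
    hball x (Metric.closedBall_subset_ball hrδ hx)
  have hKΩ : K ⊆ Ω := fun x hx => (hKb x hx).2
  let u : EuclideanSpace ℝ (Fin N) → ℝ := fun x => η (r⁻¹ • (x - z₀))
  have hus : ContDiff ℝ (⊤ : ℕ∞) u :=
    hηs.comp ((contDiff_id.sub contDiff_const).const_smul r⁻¹)
  have hfu : ∀ x, fderiv ℝ u x = r⁻¹ • fderiv ℝ (η : EuclideanSpace ℝ (Fin N) → ℝ) (r⁻¹ • (x - z₀)) := by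
    intro x
    have h1 : HasFDerivAt (fun x : EuclideanSpace ℝ (Fin N) => r⁻¹ • (x - z₀))
        (r⁻¹ • ContinuousLinearMap.id ℝ (EuclideanSpace ℝ (Fin N))) x :=
      ((hasFDerivAt_id x).sub_const z₀).const_smul r⁻¹
    have h2 := ((hηd (r⁻¹ • (x - z₀))).hasFDerivAt.comp x h1).fderiv
    rw [show u = (η : EuclideanSpace ℝ (Fin N) → ℝ) ∘ (fun x => r⁻¹ • (x - z₀)) from rfl, h2]
    ext y; simp
  have hut : tsupport u ⊆ K := by
    refine closure_minimal ?_ Metric.isClosed_closedBall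
    intro x hx
    by_contra hxK
    refine hx (η.zero_of_le_dist ?_)
    have : r < dist x z₀ := by simpa [hK] using hxK
    have h3 : dist (r⁻¹ • (x - z₀)) 0 = r⁻¹ * dist x z₀ := by
      rw [dist_zero_right, norm_smul, dist_eq_norm, Real.norm_of_nonneg (by positivity)]
    change (1:ℝ) ≤ _
    rw [h3, inv_mul_eq_div, one_le_div hr0]
    exact this.le
  have huc : HasCompactSupport u := hKc.of_isClosed_subset (isClosed_tsupport u) hut
  have hu0 : ∀ x, x ∉ K → u x = 0 := fun x hx => image_eq_zero_of_notMem_tsupport fun h => hx (hut h)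
  have hdu0 : ∀ x, x ∉ K → fderiv ℝ u x = 0 := fun x hx =>
    image_eq_zero_of_notMem_tsupport fun h => hx (hut (tsupport_fderiv_subset ℝ h))
  have hduc : Continuous (fderiv ℝ u) := hus.continuous_fderiv (by simp)
  have scale : ∀ F : EuclideanSpace ℝ (Fin N) → ℝ,
      ∫ x, F (r⁻¹ • (x - z₀)) = r ^ N * ∫ x, F x := by
    intro F
    rw [integral_sub_right_eq_self (fun x => F (r⁻¹ • x)) z₀,
      Measure.integral_comp_inv_smul_of_nonneg _ _ hr0.le]
    simp
  have hI1 : ∫ x in Ω, u x * u x = r ^ N * A := by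
    rw [setIntegral_eq_integral_of_forall_compl_eq_zero
      (fun x hx => by rw [hu0 x (fun h => hx (hKΩ h)), mul_zero])]
    exact scale (fun x => η x * η x)
  have hI2 : ∫ x in K, ‖fderiv ℝ u x‖ ^ 2 = r ^ N * ((r⁻¹) ^ 2 * B) := by
    rw [setIntegral_eq_integral_of_forall_compl_eq_zero
      (fun x hx => by rw [hdu0 x hx]; simp)]
    have := scale (fun x => (r⁻¹) ^ 2 * ‖fderiv ℝ (η : EuclideanSpace ℝ (Fin N) → ℝ) x‖ ^ 2)
    rw [hB, ← integral_const_mul, ← this]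
    congr 1; ext x
    rw [hfu, norm_smul, mul_pow, Real.norm_of_nonneg (by positivity)]
  have hI3 : (∫ x in Ω, (fderiv ℝ a x (x - x₀) * ‖fderiv ℝ u x‖ ^ 2
            + fderiv ℝ b x (x - x₀) * ‖fderiv ℝ u x‖ ^ 2)) ≤ -c * (r ^ N * ((r⁻¹) ^ 2 * B)) := by
    have e : (fun x => fderiv ℝ a x (x - x₀) * ‖fderiv ℝ u x‖ ^ 2
            + fderiv ℝ b x (x - x₀) * ‖fderiv ℝ u x‖ ^ 2) = fun x => g x * ‖fderiv ℝ u x‖ ^ 2 := by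
      ext x; simp only [hg]; ring
    rw [e, setIntegral_eq_of_subset_of_forall_diff_eq_zero hΩo.measurableSet hKΩ
      (fun x hx => by rw [hdu0 x hx.2]; simp), ← hI2, ← integral_const_mul]
    refine setIntegral_mono_on ?_ ?_ hKc.measurableSet ?_
    · exact ((hgc.mono hKΩ).mul (hduc.norm.pow 2).continuousOn).integrableOn_compact hKc
    · exact (continuous_const.mul (hduc.norm.pow 2)).continuousOn.integrableOn_compact hKc
    · intro x hx
      exact mul_le_mul_of_nonneg_right (hKb x hx).1.le (by positivity)
  refine ⟨u, u, hus, huc, hut.trans hKΩ, hus, huc, hut.trans hKΩ, ?_, ?_⟩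
  · rw [hI1]; positivity
  · rw [hI1]
    have hp : 0 < r ^ N * (r⁻¹) ^ 2 := by positivity
    have h5 := mul_lt_mul_of_pos_left hrM hp
    have h6 : r ^ N * (r⁻¹) ^ 2 * (M * A * r ^ 2) = M * (r ^ N * A) := by
      field_simp
    rw [h6] at h5
    nlinarith [hI3, h5]
end
end

section
/- Let N ≥ 1 be an integer, Ω ⊂ ℝ^N a nonempty bounded open set, x₀ ∈ Ω, and a, b : ℝ^N → ℝ continuously differentiable on Ω. Suppose a admits the expansion of order k at x₀ with coefficient A_k > 0 and b admits the expansion of order l at x₀ with coefficient B_l > 0, where k > 2 and l > 2, and that ã(x) ≥ 0 and b̃(x) ≥ 0 for almost every x ∈ Ω. Then the infimum of φ_{a,b}(u,v) over pairs of smooth functions u, v compactly supported in Ω with ∫_Ω u v dx > 0 equals 0; that is, φ_{a,b}(u,v) ≥ 0 for every such pair, and for every δ > 0 there exists such a pair with φ_{a,b}(u,v) < δ. -/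
open MeasureTheory Real Filter Topology

noncomputable section

theorem aux_small {E : Type*} [NormedAddCommGroup E] (a : E → ℝ) (x₀ : E) (k A : ℝ) (hA : 0 < A)
    (hk : 2 < k)
    (h : Tendsto (fun x => (a x - a x₀ - A * ‖x - x₀‖ ^ k) / ‖x - x₀‖ ^ k)
      (𝓝[≠] x₀) (𝓝 0)) (η : ℝ) (hη : 0 < η) :
    ∀ᶠ x in 𝓝 x₀, |a x - a x₀| ≤ η * ‖x - x₀‖ ^ 2 := by
  have h1 : ∀ᶠ x in 𝓝[≠] x₀, |(a x - a x₀ - A * ‖x - x₀‖ ^ k) / ‖x - x₀‖ ^ k| < 1 := by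
    have := h.abs
    rw [abs_zero] at this
    exact this.eventually (gt_mem_nhds one_pos)
  have h2 : ∀ᶠ x in 𝓝 x₀, (A + 1) * ‖x - x₀‖ ^ (k - 2) < η := by
    have hc : ContinuousAt (fun x => (A + 1) * ‖x - x₀‖ ^ (k - 2)) x₀ := by
      apply ContinuousAt.mul continuousAt_const
      apply ContinuousAt.rpow_const (by fun_prop)
      right; linarith
    have : (A + 1) * ‖x₀ - x₀‖ ^ (k - 2) < η := by
      rw [sub_self, norm_zero, Real.zero_rpow (by linarith)]; simpa using hη
    exact hc.eventually (gt_mem_nhds this)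
  rw [eventually_nhdsWithin_iff] at h1
  filter_upwards [h1, h2] with x hx1 hx2
  by_cases hx : x = x₀
  · subst hx; simp
  have hr : 0 < ‖x - x₀‖ := norm_pos_iff.2 (sub_ne_zero.2 hx)
  have hrk : 0 < ‖x - x₀‖ ^ k := Real.rpow_pos_of_pos hr k
  have h3 := hx1 hx
  rw [abs_div, abs_of_pos hrk, div_lt_one hrk] at h3
  have h4 : ‖x - x₀‖ ^ k = ‖x - x₀‖ ^ (k - 2) * ‖x - x₀‖ ^ 2 := by
    rw [← Real.rpow_natCast, ← Real.rpow_add hr]; norm_num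
  have h5 : |a x - a x₀| ≤ (A + 1) * ‖x - x₀‖ ^ k := by
    have := abs_lt.1 h3
    have := mul_pos hA hrk
    rw [abs_le]; constructor <;> nlinarith
  calc _ ≤ _ := h5
    _ = ((A + 1) * ‖x - x₀‖ ^ (k - 2)) * ‖x - x₀‖ ^ 2 := by rw [h4]; ring
    _ ≤ _ := by gcongr

/-- some dilation parameter with small derivative -/
theorem aux_deriv {N : ℕ} (x₀ : EuclideanSpace ℝ (Fin N)) (c : EuclideanSpace ℝ (Fin N) → ℝ)
    (c' : EuclideanSpace ℝ (Fin N) → EuclideanSpace ℝ (Fin N) →L[ℝ] ℝ) (R : ℝ) (hR : 0 < R)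
    (hc : ∀ x ∈ Metric.closedBall x₀ R, HasFDerivAt c (c' x) x)
    (hc' : ContinuousOn c' (Metric.closedBall x₀ R))
    (ψ : EuclideanSpace ℝ (Fin N) → ℝ) (hψ : Continuous ψ) (hψ0 : ∀ y, 0 ≤ ψ y) (η : ℝ) (hη : 0 < η)
    (hs : ∀ᶠ x in 𝓝 x₀, |c x| ≤ η * ‖x - x₀‖ ^ 2) :
    ∃ t, 0 < t ∧ t < R ∧
      t * (∫ y in Metric.closedBall 0 1, c' (x₀ + t • y) y * ψ y) ≤
        10 * η * t ^ 2 * ∫ y in Metric.closedBall 0 1, ψ y := by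
  obtain ⟨r, hr, hsr⟩ := Metric.eventually_nhds_iff.1 hs
  have hK : IsCompact (Metric.closedBall (0 : EuclideanSpace ℝ (Fin N)) 1) := isCompact_closedBall _ _
  have hKm : MeasurableSet (Metric.closedBall (0 : EuclideanSpace ℝ (Fin N)) 1) :=
    measurableSet_closedBall
  have hψi : IntegrableOn ψ (Metric.closedBall 0 1) := hψ.continuousOn.integrableOn_compact hK
  have hmem : ∀ t, 0 ≤ t → t ≤ R → ∀ y ∈ Metric.closedBall (0 : EuclideanSpace ℝ (Fin N)) 1,
      x₀ + t • y ∈ Metric.closedBall x₀ R := by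
    intro t ht htR y hy
    rw [mem_closedBall_zero_iff] at hy
    rw [mem_closedBall_iff_norm, add_sub_cancel_left, norm_smul, Real.norm_of_nonneg ht]
    nlinarith
  obtain ⟨M, hM⟩ := (isCompact_closedBall x₀ R).exists_bound_of_continuousOn hc'
  have hM0 : 0 ≤ M := (norm_nonneg _).trans (hM x₀ (Metric.mem_closedBall_self hR.le))
  have hcc : ContinuousOn c (Metric.closedBall x₀ R) :=
    fun x hx => (hc x hx).continuousAt.continuousWithinAt
  set G : ℝ → ℝ := fun t => ∫ y in Metric.closedBall 0 1, c (x₀ + t • y) * ψ y with hG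
  have hGc : ∀ t, 0 ≤ t → t ≤ R →
      ContinuousOn (fun y => c (x₀ + t • y) * ψ y) (Metric.closedBall 0 1) := by
    intro t h0 h1
    exact (hcc.comp (by fun_prop) (fun y hy => hmem t h0 h1 y hy)).mul hψ.continuousOn
  have hGc' : ∀ t, 0 ≤ t → t ≤ R →
      ContinuousOn (fun y => c' (x₀ + t • y) y * ψ y) (Metric.closedBall 0 1) := by
    intro t h0 h1
    exact ((hc'.comp (by fun_prop) (fun y hy => hmem t h0 h1 y hy)).clm_apply
      continuousOn_id).mul hψ.continuousOn
  have hd : ∀ t, 0 < t → t < R →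
      HasDerivAt G (∫ y in Metric.closedBall 0 1, c' (x₀ + t • y) y * ψ y) t := by
    intro t h0 h1
    refine (hasDerivAt_integral_of_dominated_loc_of_deriv_le
      (F := fun t y => c (x₀ + t • y) * ψ y) (F' := fun t y => c' (x₀ + t • y) y * ψ y)
      (s := Set.Ioo 0 R)
      (bound := fun y => M * ψ y) (Ioo_mem_nhds h0 h1) ?_ ?_ ?_ ?_ ?_ ?_).2
    · filter_upwards [Ioo_mem_nhds h0 h1] with s hs
      exact (hGc s hs.1.le hs.2.le).aestronglyMeasurable hKm
    · exact (hGc t h0.le h1.le).integrableOn_compact hK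
    · exact (hGc' t h0.le h1.le).aestronglyMeasurable hKm
    · filter_upwards [ae_restrict_mem hKm] with y hy s hs
      rw [norm_mul, Real.norm_of_nonneg (hψ0 y)]
      gcongr
      · exact hψ0 y
      have h2 := hM _ (hmem s hs.1.le hs.2.le y hy)
      rw [mem_closedBall_zero_iff] at hy
      calc _ ≤ _ := (c' (x₀ + s • y)).le_opNorm y
        _ ≤ M * 1 := by gcongr
        _ = M := mul_one _
    · exact hψi.const_mul M
    · filter_upwards [ae_restrict_mem hKm] with y hy s hs
      have h2 := hc _ (hmem s hs.1.le hs.2.le y hy)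
      have h3 : HasDerivAt (fun s : ℝ => x₀ + s • y) y s := by
        simpa using ((hasDerivAt_id s).smul_const y).const_add x₀
      exact (h2.comp_hasDerivAt s h3).mul_const _
  have hb : ∀ t, 0 < t → t < R → t < r →
      |G t| ≤ η * t ^ 2 * ∫ y in Metric.closedBall 0 1, ψ y := by
    intro t h0 h1 h2
    rw [← integral_const_mul, ← Real.norm_eq_abs]
    apply norm_integral_le_of_norm_le (hψi.const_mul _)
    filter_upwards [ae_restrict_mem hKm] with y hy
    rw [norm_mul, Real.norm_of_nonneg (hψ0 y)]
    gcongr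
    · exact hψ0 y
    rw [mem_closedBall_zero_iff] at hy
    have h4 : ‖t • y‖ ≤ t := by rw [norm_smul, Real.norm_of_nonneg h0.le]; nlinarith
    have h3 := @hsr (x₀ + t • y) (by rw [dist_eq_norm, add_sub_cancel_left]; linarith)
    rw [add_sub_cancel_left] at h3
    rw [Real.norm_eq_abs]
    exact h3.trans (by gcongr)
  set ε := min R r / 3 with hε
  have hε0 : 0 < ε := by positivity
  have hεR : 2 * ε < R := by have := min_le_left R r; linarith
  have hεr : 2 * ε < r := by have := min_le_right R r; linarith
  obtain ⟨t, ht, he⟩ := exists_hasDerivAt_eq_slope G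
    (fun t => ∫ y in Metric.closedBall 0 1, c' (x₀ + t • y) y * ψ y)
    (show ε < 2 * ε by linarith)
    (fun s hs => (hd s (by linarith [hs.1]) (by linarith [hs.2])).continuousAt.continuousWithinAt)
    (fun s hs => hd s (by linarith [hs.1]) (by linarith [hs.2]))
  refine ⟨t, by linarith [ht.1], by linarith [ht.2], ?_⟩
  rw [he]
  have b1 := abs_le.1 (hb ε hε0 (by linarith) (by linarith))
  have b2 := abs_le.1 (hb (2 * ε) (by linarith) hεR hεr)
  have hI : 0 ≤ ∫ y in Metric.closedBall 0 1, ψ y := integral_nonneg hψ0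
  set I := ∫ y in Metric.closedBall 0 1, ψ y
  have e1 : (G (2 * ε) - G ε) / (2 * ε - ε) ≤ 5 * η * ε * I := by
    rw [div_le_iff₀ (by linarith)]
    nlinarith
  have t0 : 0 < t := by linarith [ht.1]
  calc _ ≤ t * (5 * η * ε * I) := by gcongr
    _ ≤ t * (5 * η * t * I) := by gcongr; exact ht.1.le
    _ ≤ _ := by
      have : 0 ≤ t ^ 2 * η * I := by positivity
      nlinarith

theorem stmt_16
    (N : ℕ) (hN : 1 ≤ N)
    (Ω : Set (EuclideanSpace ℝ (Fin N)))
    (hΩo : IsOpen Ω) (hΩb : Bornology.IsBounded Ω) (hΩne : Ω.Nonempty)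
    (x₀ : EuclideanSpace ℝ (Fin N)) (hx₀ : x₀ ∈ Ω)
    (a b : EuclideanSpace ℝ (Fin N) → ℝ)
    (ha : ContDiffOn ℝ 1 a Ω) (hb : ContDiffOn ℝ 1 b Ω)
    (k l A B : ℝ) (hA : 0 < A) (hB : 0 < B) (hk : 2 < k) (hl : 2 < l)
    (hexpa : Tendsto (fun x => (a x - a x₀ - A * ‖x - x₀‖ ^ k) / ‖x - x₀‖ ^ k)
      (𝓝[≠] x₀) (𝓝 0))
    (hexpb : Tendsto (fun x => (b x - b x₀ - B * ‖x - x₀‖ ^ l) / ‖x - x₀‖ ^ l)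
      (𝓝[≠] x₀) (𝓝 0))
    (hatpos : ∀ᵐ x ∂(volume.restrict Ω), 0 ≤ fderiv ℝ a x (x - x₀))
    (hbtpos : ∀ᵐ x ∂(volume.restrict Ω), 0 ≤ fderiv ℝ b x (x - x₀)) :
    (∀ u v : EuclideanSpace ℝ (Fin N) → ℝ,
      ContDiff ℝ (⊤ : ℕ∞) u → HasCompactSupport u → tsupport u ⊆ Ω →
      ContDiff ℝ (⊤ : ℕ∞) v → HasCompactSupport v → tsupport v ⊆ Ω →
      0 < (∫ x in Ω, u x * v x) →
      0 ≤ (1 / 4) * (∫ x in Ω,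
            (fderiv ℝ a x (x - x₀) * ‖fderiv ℝ u x‖ ^ 2
              + fderiv ℝ b x (x - x₀) * ‖fderiv ℝ v x‖ ^ 2))
          / ∫ x in Ω, u x * v x)
    ∧ (∀ δ : ℝ, 0 < δ → ∃ u v : EuclideanSpace ℝ (Fin N) → ℝ,
      ContDiff ℝ (⊤ : ℕ∞) u ∧ HasCompactSupport u ∧ tsupport u ⊆ Ω ∧
      ContDiff ℝ (⊤ : ℕ∞) v ∧ HasCompactSupport v ∧ tsupport v ⊆ Ω ∧
      0 < (∫ x in Ω, u x * v x) ∧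
      (1 / 4) * (∫ x in Ω,
            (fderiv ℝ a x (x - x₀) * ‖fderiv ℝ u x‖ ^ 2
              + fderiv ℝ b x (x - x₀) * ‖fderiv ℝ v x‖ ^ 2))
          / (∫ x in Ω, u x * v x) < δ) := by
  constructor
  · intro u v _ _ _ _ _ _ hpos
    apply div_nonneg _ hpos.le
    apply mul_nonneg (by norm_num)
    apply integral_nonneg_of_ae
    filter_upwards [hatpos, hbtpos] with x h1 h2
    simp only [Pi.zero_apply]
    positivity
  intro δ hδ
  obtain ⟨R, hR, hRΩ⟩ := Metric.nhds_basis_closedBall.mem_iff.1 (hΩo.mem_nhds hx₀)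
  let φ : ContDiffBump (0 : EuclideanSpace ℝ (Fin N)) := ⟨1/2, 1, by norm_num, by norm_num⟩
  have hφ : ContDiff ℝ (⊤ : ℕ∞) φ := φ.contDiff
  have hφt : tsupport φ = Metric.closedBall 0 1 := φ.tsupport_eq
  set ψ : EuclideanSpace ℝ (Fin N) → ℝ := fun y => ‖fderiv ℝ φ y‖ ^ 2 with hψ
  have hψc : Continuous ψ := (hφ.continuous_fderiv (by simp)).norm.pow 2
  have hψz : ∀ y, y ∉ Metric.closedBall (0 : EuclideanSpace ℝ (Fin N)) 1 → ψ y = 0 := by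
    intro y hy
    rw [← hφt] at hy
    have : fderiv ℝ φ y = 0 := fderiv_of_notMem_tsupport (𝕜 := ℝ) hy
    simp [hψ, this]
  set I := ∫ y in Metric.closedBall 0 1, ψ y with hI
  have hI0 : 0 ≤ I := integral_nonneg fun y => by positivity
  set J := ∫ y, φ y * φ y with hJ
  have hJ0 : 0 < J := by
    have hc : Continuous fun y => φ y * φ y := φ.continuous.mul φ.continuous
    apply hc.integral_pos_of_hasCompactSupport_nonneg_nonzero
      (φ.hasCompactSupport.mul_left) (fun y => mul_self_nonneg _) (x := 0)
    have : φ 0 = 1 := φ.one_of_mem_closedBall (by simp [φ.rIn_pos.le])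
    simp [this]
  set η := δ * J / (10 * (I + 1)) with hη
  have hη0 : 0 < η := by positivity
  set c' := fun x => fderiv ℝ a x + fderiv ℝ b x with hc'
  obtain ⟨t, t0, tR, ht⟩ := aux_deriv x₀ (fun x => (a x - a x₀) + (b x - b x₀)) c' R hR
    (by
      intro x hx
      have h1 := (ha.contDiffAt (hΩo.mem_nhds (hRΩ hx))).differentiableAt (by simp)
      have h2 := (hb.contDiffAt (hΩo.mem_nhds (hRΩ hx))).differentiableAt (by simp)
      exact (h1.hasFDerivAt.sub_const _).add (h2.hasFDerivAt.sub_const _))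
    (((ha.continuousOn_fderiv_of_isOpen hΩo (by simp)).add
      (hb.continuousOn_fderiv_of_isOpen hΩo (by simp))).mono hRΩ)
    ψ hψc (fun y => by positivity) η hη0
    (by
      filter_upwards [aux_small a x₀ k A hA hk hexpa (η / 2) (by positivity),
        aux_small b x₀ l B hB hl hexpb (η / 2) (by positivity)] with x h1 h2
      calc _ ≤ _ := abs_add_le _ _
        _ ≤ η / 2 * ‖x - x₀‖ ^ 2 + η / 2 * ‖x - x₀‖ ^ 2 := add_le_add h1 h2
        _ = _ := by ring)
  set u : EuclideanSpace ℝ (Fin N) → ℝ := fun x => φ (t⁻¹ • (x - x₀)) with hu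
  have hus : ContDiff ℝ (⊤ : ℕ∞) u := hφ.comp (by fun_prop)
  have hsub : tsupport u ⊆ Metric.closedBall x₀ R := by
    apply closure_minimal _ Metric.isClosed_closedBall
    intro x hx
    have h1 : t⁻¹ • (x - x₀) ∈ tsupport φ := subset_tsupport _ hx
    rw [hφt, mem_closedBall_zero_iff, norm_smul, norm_inv, Real.norm_of_nonneg t0.le,
      inv_mul_le_iff₀ t0] at h1
    rw [mem_closedBall_iff_norm]; linarith
  have hucs : HasCompactSupport u :=
    (isCompact_closedBall x₀ R).of_isClosed_subset (isClosed_tsupport u) hsub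
  have huΩ : tsupport u ⊆ Ω := hsub.trans hRΩ
  have hdu : ∀ x, ‖fderiv ℝ u x‖ ^ 2 = (t ^ 2)⁻¹ * ψ (t⁻¹ • (x - x₀)) := by
    intro x
    have h1 : HasFDerivAt (fun x : EuclideanSpace ℝ (Fin N) => t⁻¹ • (x - x₀))
        (t⁻¹ • ContinuousLinearMap.id ℝ (EuclideanSpace ℝ (Fin N))) x :=
      ((hasFDerivAt_id x).sub_const x₀).const_smul t⁻¹
    have h2 : HasFDerivAt φ (fderiv ℝ φ (t⁻¹ • (x - x₀))) (t⁻¹ • (x - x₀)) :=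
      ((hφ.differentiable (by simp)) _).hasFDerivAt
    have h3 : fderiv ℝ u x = t⁻¹ • fderiv ℝ φ (t⁻¹ • (x - x₀)) := by
      have h4 : HasFDerivAt u ((fderiv ℝ φ (t⁻¹ • (x - x₀))).comp
        (t⁻¹ • ContinuousLinearMap.id ℝ (EuclideanSpace ℝ (Fin N)))) x :=
        HasFDerivAt.comp (g := (φ : EuclideanSpace ℝ (Fin N) → ℝ))
          (f := fun x => t⁻¹ • (x - x₀)) x h2 h1
      rw [h4.fderiv, ContinuousLinearMap.comp_smul, ContinuousLinearMap.comp_id]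
    rw [h3, norm_smul, mul_pow, norm_inv, Real.norm_of_nonneg t0.le, inv_pow]
  -- change of variables
  have hcv : ∀ F : EuclideanSpace ℝ (Fin N) → ℝ, ∫ x, F x = t ^ N * ∫ y, F (x₀ + t • y) := by
    intro F
    have h1 := Measure.integral_comp_smul_of_nonneg (volume : Measure (EuclideanSpace ℝ (Fin N)))
      (fun z => F (x₀ + z)) t (hR := t0.le)
    rw [h1, integral_add_left_eq_self F x₀, finrank_euclideanSpace_fin, smul_eq_mul,
      ← mul_assoc, mul_inv_cancel₀ (by positivity), one_mul]
  have hcan : ∀ y : EuclideanSpace ℝ (Fin N), t⁻¹ • (x₀ + t • y - x₀) = y := by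
    intro y
    rw [add_sub_cancel_left, smul_smul, inv_mul_cancel₀ t0.ne', one_smul]
  have hden : ∫ x in Ω, u x * u x = t ^ N * J := by
    rw [setIntegral_eq_integral_of_forall_compl_eq_zero, hcv]
    · simp only [hu, hcan, hJ]
    · intro x hx
      rw [image_eq_zero_of_notMem_tsupport (fun h => hx (huΩ h)), zero_mul]
  have hnum : ∫ x in Ω, (fderiv ℝ a x (x - x₀) * ‖fderiv ℝ u x‖ ^ 2
              + fderiv ℝ b x (x - x₀) * ‖fderiv ℝ u x‖ ^ 2)
      = t ^ N * ((t ^ 2)⁻¹ * (t * ∫ y in Metric.closedBall 0 1, c' (x₀ + t • y) y * ψ y)) := by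
    rw [setIntegral_eq_integral_of_forall_compl_eq_zero, hcv,
      setIntegral_eq_integral_of_forall_compl_eq_zero]
    · congr 1
      rw [← mul_assoc, ← integral_const_mul]
      apply integral_congr_ae
      refine Eventually.of_forall fun y => ?_
      simp only [hdu, hcan]
      simp only [hc', add_sub_cancel_left, map_smul, smul_eq_mul,
        add_apply]
      ring
    · intro y hy
      rw [hψz y hy, mul_zero]
    · intro x hx
      rw [fderiv_of_notMem_tsupport (𝕜 := ℝ) (fun h => hx (huΩ h))]
      simp
  refine ⟨u, u, hus, hucs, huΩ, hus, hucs, huΩ, ?_, ?_⟩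
  · rw [hden]; positivity
  rw [hnum, hden, div_lt_iff₀ (by positivity)]
  set Q := ∫ y in Metric.closedBall 0 1, c' (x₀ + t • y) y * ψ y
  have h1 : (t ^ 2)⁻¹ * (t * Q) ≤ 10 * η * I := by
    rw [inv_mul_le_iff₀ (by positivity)]
    linarith
  have h2 : 10 * η * I ≤ δ * J := by
    have : 10 * η * (I + 1) = δ * J := by rw [hη]; field_simp
    nlinarith
  have h3 : 0 < t ^ N := by positivity
  have h4 : 0 < δ * J := by positivity
  calc 1 / 4 * (t ^ N * ((t ^ 2)⁻¹ * (t * Q))) ≤ 1 / 4 * (t ^ N * (δ * J)) := by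
        have := mul_le_mul_of_nonneg_left (h1.trans h2) h3.le
        linarith
    _ < _ := by nlinarith [mul_pos h3 h4]
end
end

section
/- Let N ≥ 1 be an integer, Ω ⊂ ℝ^N a nonempty bounded open set, x₀ ∈ Ω, and a, b : ℝ^N → ℝ differentiable on Ω. Let 0 < k ≤ 2, 0 < l ≤ 2, A_k > 0 and B_l > 0, and assume kA_k|x−x₀|^k ≤ ã(x) and lB_l|x−x₀|^l ≤ b̃(x) for almost every x ∈ Ω. Then for every pair of smooth functions u, v compactly supported in Ω with ∫_Ω u v dx > 0, one has φ_{a,b}(u,v) ≥ (N²/16) · min(k A_k diam(Ω)^{k−2}, l B_l diam(Ω)^{l−2}), where diam(Ω) is the diameter of Ω. -/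
open MeasureTheory Real Filter Topology

noncomputable section

lemma aux_lint {f g : ℝ → ℝ} {p q : ℝ} (hpq : p ≤ q)
    (hd : ∀ t ∈ Set.Icc p q, HasDerivAt f (g t) t)
    (hg : ∀ᵐ t ∂(volume.restrict (Set.Icc p q)), 0 ≤ g t) :
    ∫⁻ t in Set.Icc p q, ENNReal.ofReal (g t) ≤ ENNReal.ofReal (f q - f p) := by
  have hmono : MonotoneOn f (Set.Icc p q) := by
    intro s hs t ht hst
    have hsub : Set.Icc s t ⊆ Set.Icc p q := Set.Icc_subset_Icc hs.1 ht.2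
    have hz : (fun y => max (-g y) 0) =ᵐ[volume.restrict (Set.Icc s t)] fun _ => (0:ℝ) := by
      filter_upwards [ae_restrict_of_ae_restrict_of_subset hsub hg] with y hy
      simpa using hy
    have h := intervalIntegral.sub_le_integral_of_hasDeriv_right_of_le (g := fun y => - f y)
      (g' := fun y => - g y) (φ := fun y => max (-g y) 0) hst
      (fun y hy => (hd y (hsub hy)).continuousAt.continuousWithinAt.neg)
      (fun y hy => (hd y (hsub (Set.Ioo_subset_Icc_self hy))).neg.hasDerivWithinAt)
      ((integrable_congr hz).2 (integrable_zero _ _ _))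
      (fun y _ => le_max_left _ _)
    have h0 : ∫ y in s..t, max (-g y) 0 = 0 := by
      rw [intervalIntegral.integral_of_le hst, ← integral_Icc_eq_integral_Ioc,
        integral_congr_ae hz]
      simp
    rw [h0] at h
    linarith
  have hu : MonotoneOn f (Set.uIcc p q) := by rwa [Set.uIcc_of_le hpq]
  have hi := hu.intervalIntegrable_deriv
  have hm := hu.intervalIntegral_deriv_mem_uIcc
  have hfpq : f p ≤ f q := hmono (by simp [hpq]) (by simp [hpq]) hpq
  rw [Set.uIcc_of_le (by linarith)] at hm
  rw [intervalIntegrable_iff_integrableOn_Icc_of_le hpq] at hi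
  rw [intervalIntegral.integral_of_le hpq, ← integral_Icc_eq_integral_Ioc] at hm
  have heq : ∀ᵐ t ∂(volume.restrict (Set.Icc p q)), deriv f t = g t := by
    filter_upwards [ae_restrict_mem measurableSet_Icc] with t ht
    exact (hd t ht).deriv
  have hi' : IntegrableOn g (Set.Icc p q) := (integrable_congr heq).1 hi
  rw [integral_congr_ae heq] at hm
  rw [← ofReal_integral_eq_lintegral_ofReal hi' hg]
  exact ENNReal.ofReal_le_ofReal hm.2

lemma aux_map {N : ℕ} (x₀ : EuclideanSpace ℝ (Fin N)) {t : ℝ} (ht : t ≠ 0) :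
    Measure.map (fun x => x₀ + t • (x - x₀)) volume =
      ENNReal.ofReal (abs (t ^ N)⁻¹) • (volume : Measure (EuclideanSpace ℝ (Fin N))) := by
  have h1 : (fun x : EuclideanSpace ℝ (Fin N) => x₀ + t • (x - x₀)) =
      (fun y => x₀ + y) ∘ (fun y => t • y) ∘ (fun x => x - x₀) := rfl
  rw [h1, ← Measure.map_map (by fun_prop) (by fun_prop), ← Measure.map_map (by fun_prop) (by fun_prop),
    (measurePreserving_sub_right volume x₀).map_eq, Measure.map_addHaar_smul _ ht, Measure.map_smul,
    (measurePreserving_add_left volume x₀).map_eq]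
  simp

lemma aux_loc {N : ℕ} {Ω : Set (EuclideanSpace ℝ (Fin N))} (hΩo : IsOpen Ω)
    (x₀ : EuclideanSpace ℝ (Fin N)) {a : EuclideanSpace ℝ (Fin N) → ℝ}
    (ha : DifferentiableOn ℝ a Ω)
    (hpos : ∀ᵐ x ∂(volume.restrict Ω), 0 ≤ fderiv ℝ a x (x - x₀))
    {y₀ : EuclideanSpace ℝ (Fin N)} (hy : y₀ ∈ Ω) :
    ∃ ρ > 0, IntegrableOn (fun x => fderiv ℝ a x (x - x₀)) (Metric.closedBall y₀ ρ) := by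
  have hmeas : Measurable (fun x => fderiv ℝ a x (x - x₀)) := by
    have h1 := measurable_fderiv ℝ a
    exact (isBoundedBilinearMap_apply.continuous.measurable).comp
      (h1.prodMk (measurable_id.sub_const x₀))
  obtain ⟨R, hR, hRΩ⟩ := Metric.isOpen_iff.1 hΩo y₀ hy
  obtain ⟨r, hr, hrR⟩ : ∃ r > 0, 2 * r < R := ⟨R / 3, by positivity, by linarith⟩
  have hbΩ : Metric.closedBall y₀ (2 * r) ⊆ Ω :=
    (Metric.closedBall_subset_ball hrR).trans hRΩ
  set C := ‖y₀ - x₀‖ + r with hC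
  have hCpos : 0 < C := by positivity
  set δ := (r / 2) / C with hδ
  have hδpos : 0 < δ := by positivity
  have hδC : δ * C = r / 2 := by rw [hδ]; field_simp
  have hnorm : ∀ x ∈ Metric.closedBall y₀ r, ‖x - x₀‖ ≤ C := by
    intro x hx
    rw [mem_closedBall_iff_norm] at hx
    calc ‖x - x₀‖ = ‖(y₀ - x₀) + (x - y₀)‖ := by congr 1; abel
      _ ≤ _ := norm_add_le _ _
      _ ≤ C := by rw [hC]; linarith
  have hT : ∀ x ∈ Metric.closedBall y₀ r, ∀ t ∈ Set.Icc 1 (1 + δ),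
      x₀ + t • (x - x₀) ∈ Metric.closedBall y₀ (2 * r) := by
    intro x hx t ht
    have h1 := hnorm x hx
    rw [mem_closedBall_iff_norm] at hx ⊢
    have : x₀ + t • (x - x₀) - y₀ = (x - y₀) + (t - 1) • (x - x₀) := by module
    rw [this]
    refine (norm_add_le _ _).trans ?_
    rw [norm_smul, Real.norm_of_nonneg (by linarith [ht.1])]
    have : (t - 1) * ‖x - x₀‖ ≤ δ * C := by
      apply mul_le_mul _ h1 (norm_nonneg _) hδpos.le
      linarith [ht.2]
    linarith
  have hS : ∀ t ∈ Set.Icc 1 (1 + δ), ∀ x, x₀ + t • (x - x₀) ∈ Metric.closedBall y₀ (r / 2) →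
      x ∈ Metric.closedBall y₀ r := by
    intro t ht x hx
    have h1 := hnorm _ (Metric.closedBall_subset_closedBall (by linarith) hx)
    rw [mem_closedBall_iff_norm] at hx ⊢
    rw [add_sub_cancel_left, norm_smul, Real.norm_of_nonneg (by linarith [ht.1])] at h1
    have : x - y₀ = (x₀ + t • (x - x₀) - y₀) - (t - 1) • (x - x₀) := by module
    rw [this]
    refine (norm_sub_le _ _).trans ?_
    rw [norm_smul, Real.norm_of_nonneg (by linarith [ht.1])]
    have h2 : ‖x - x₀‖ ≤ C := by nlinarith [ht.1, norm_nonneg (x - x₀)]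
    have : (t - 1) * ‖x - x₀‖ ≤ δ * C := by
      apply mul_le_mul _ h2 (norm_nonneg _) hδpos.le
      linarith [ht.2]
    linarith
  -- bound of a
  obtain ⟨M, hM⟩ := (isCompact_closedBall y₀ (2 * r)).exists_bound_of_continuousOn
    (ha.continuousOn.mono hbΩ)
  have hmeas2 : Measurable (fun z : EuclideanSpace ℝ (Fin N) × ℝ =>
      fderiv ℝ a (x₀ + z.2 • (z.1 - x₀)) (x₀ + z.2 • (z.1 - x₀) - x₀)) :=
    hmeas.comp (g := fun x => fderiv ℝ a x (x - x₀))
      (f := fun z : EuclideanSpace ℝ (Fin N) × ℝ => x₀ + z.2 • (z.1 - x₀)) (by fun_prop)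
  have hmapT : ∀ t ∈ Set.Icc 1 (1 + δ), t ≠ 0 := fun t ht => by linarith [ht.1]
  have hae : ∀ᵐ x ∂(volume.restrict (Metric.closedBall y₀ r)),
      ∀ᵐ t ∂(volume.restrict (Set.Icc 1 (1 + δ))),
        0 ≤ fderiv ℝ a (x₀ + t • (x - x₀)) (x₀ + t • (x - x₀) - x₀) := by
    have hms : MeasurableSet {z : EuclideanSpace ℝ (Fin N) × ℝ |
        0 ≤ fderiv ℝ a (x₀ + z.2 • (z.1 - x₀)) (x₀ + z.2 • (z.1 - x₀) - x₀)} :=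
      measurableSet_le measurable_const hmeas2
    rw [Measure.ae_ae_comm (p := fun x t =>
      0 ≤ fderiv ℝ a (x₀ + t • (x - x₀)) (x₀ + t • (x - x₀) - x₀)) hms]
    filter_upwards [ae_restrict_mem measurableSet_Icc] with t ht
    rw [ae_restrict_iff' hΩo.measurableSet] at hpos
    have hq : Measure.QuasiMeasurePreserving (fun x => x₀ + t • (x - x₀)) volume
        (volume : Measure (EuclideanSpace ℝ (Fin N))) := by
      refine ⟨by fun_prop, ?_⟩
      rw [aux_map x₀ (hmapT t ht)]
      exact Measure.smul_absolutelyContinuous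
    filter_upwards [ae_restrict_of_ae (hq.ae hpos),
      ae_restrict_mem measurableSet_closedBall] with x hx hxb
    exact hx (hbΩ (hT x hxb t ht))
  have hfin : ∫⁻ x in Metric.closedBall y₀ r, ∫⁻ t in Set.Icc 1 (1 + δ),
      ENNReal.ofReal (fderiv ℝ a (x₀ + t • (x - x₀)) (x₀ + t • (x - x₀) - x₀)) < ⊤ := by
    have hle : ∀ᵐ x ∂(volume.restrict (Metric.closedBall y₀ r)),
        ∫⁻ t in Set.Icc 1 (1 + δ),
          ENNReal.ofReal (fderiv ℝ a (x₀ + t • (x - x₀)) (x₀ + t • (x - x₀) - x₀))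
          ≤ ENNReal.ofReal (1 + δ) * ENNReal.ofReal (2 * M) := by
      filter_upwards [hae, ae_restrict_mem measurableSet_closedBall] with x hx hxb
      have hsm : ∀ t : ℝ, fderiv ℝ a (x₀ + t • (x - x₀)) (x₀ + t • (x - x₀) - x₀) =
          t * fderiv ℝ a (x₀ + t • (x - x₀)) (x - x₀) := by
        intro t
        rw [add_sub_cancel_left, map_smul, smul_eq_mul]
      have key := aux_lint (f := fun t => a (x₀ + t • (x - x₀)))
        (g := fun t => fderiv ℝ a (x₀ + t • (x - x₀)) (x - x₀)) (p := 1) (q := 1 + δ)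
        (by linarith) (by
          intro t ht
          have h1 : HasFDerivAt a (fderiv ℝ a (x₀ + t • (x - x₀))) (x₀ + t • (x - x₀)) :=
            (ha.differentiableAt (hΩo.mem_nhds (hbΩ (hT x hxb t ht)))).hasFDerivAt
          have h2 : HasDerivAt (fun t : ℝ => x₀ + t • (x - x₀)) (x - x₀) t := by
            simpa using ((hasDerivAt_id t).smul_const (x - x₀)).const_add x₀
          exact h1.comp_hasDerivAt t h2) (by
          filter_upwards [hx, ae_restrict_mem measurableSet_Icc] with t h1 ht
          rw [hsm] at h1
          exact nonneg_of_mul_nonneg_right h1 (by linarith [ht.1]))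
      calc _ ≤ ∫⁻ t in Set.Icc 1 (1 + δ), ENNReal.ofReal (1 + δ) *
              ENNReal.ofReal (fderiv ℝ a (x₀ + t • (x - x₀)) (x - x₀)) := by
            refine setLIntegral_mono_ae' measurableSet_Icc (Eventually.of_forall ?_)
            intro t ht
            rw [hsm, ENNReal.ofReal_mul (by linarith [ht.1])]
            gcongr
            exact ht.2
        _ = ENNReal.ofReal (1 + δ) * ∫⁻ t in Set.Icc 1 (1 + δ),
              ENNReal.ofReal (fderiv ℝ a (x₀ + t • (x - x₀)) (x - x₀)) :=
            lintegral_const_mul' _ _ ENNReal.ofReal_ne_top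
        _ ≤ _ := by
            gcongr
            refine key.trans (ENNReal.ofReal_le_ofReal ?_)
            have h1 := hM _ (hT x hxb 1 (by constructor <;> linarith))
            have h2 := hM _ (hT x hxb (1 + δ) (by constructor <;> linarith))
            rw [Real.norm_eq_abs, abs_le] at h1 h2
            linarith [h1.1, h2.2]
    refine (lintegral_mono_ae hle).trans_lt ?_
    rw [lintegral_const]
    refine ENNReal.mul_lt_top (ENNReal.mul_lt_top ENNReal.ofReal_lt_top ENNReal.ofReal_lt_top) ?_
    rw [Measure.restrict_apply_univ]
    exact measure_closedBall_lt_top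
  rw [lintegral_lintegral_swap (by exact hmeas2.ennreal_ofReal.aemeasurable)] at hfin
  have hae2 := ae_lt_top (by
    exact Measurable.lintegral_prod_left (f := fun x t => ENNReal.ofReal (fderiv ℝ a (x₀ + t • (x - x₀)) (x₀ + t • (x - x₀) - x₀))) hmeas2.ennreal_ofReal) hfin.ne
  have hne : NeBot (ae (volume.restrict (Set.Icc (1:ℝ) (1 + δ)))) := by
    rw [ae_neBot]
    intro h
    rw [Measure.restrict_eq_zero, Real.volume_Icc, ENNReal.ofReal_eq_zero] at h
    linarith
  obtain ⟨t, htf, ht⟩ := (hae2.and (ae_restrict_mem measurableSet_Icc)).exists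
  refine ⟨r / 2, by positivity, hmeas.aestronglyMeasurable, ?_⟩
  have hsubΩ : Metric.closedBall y₀ (r / 2) ⊆ Ω :=
    (Metric.closedBall_subset_closedBall (by linarith)).trans hbΩ
  rw [hasFiniteIntegral_iff_ofReal (ae_restrict_of_ae_restrict_of_subset hsubΩ hpos)]
  have hc : ENNReal.ofReal (abs (t ^ N)⁻¹) ≠ 0 := by
    have := hmapT t ht
    simp only [ne_eq, ENNReal.ofReal_eq_zero, not_le]
    positivity
  have h3 : ENNReal.ofReal (abs (t ^ N)⁻¹) * ∫⁻ x in Metric.closedBall y₀ (r / 2),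
      ENNReal.ofReal (fderiv ℝ a x (x - x₀)) < ⊤ := by
    rw [← smul_eq_mul, ← lintegral_smul_measure, ← Measure.restrict_smul, ← aux_map x₀ (hmapT t ht),
      setLIntegral_map measurableSet_closedBall hmeas.ennreal_ofReal (by fun_prop)]
    refine (lintegral_mono_set ?_).trans_lt htf
    intro x hx
    exact hS t ht x hx
  by_contra hcon
  rw [not_lt, top_le_iff] at hcon
  rw [hcon, ENNReal.mul_top hc] at h3
  exact lt_irrefl _ h3

lemma aux_int {N : ℕ} {Ω : Set (EuclideanSpace ℝ (Fin N))} (hΩo : IsOpen Ω)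
    (x₀ : EuclideanSpace ℝ (Fin N)) {a : EuclideanSpace ℝ (Fin N) → ℝ}
    (ha : DifferentiableOn ℝ a Ω)
    (hpos : ∀ᵐ x ∂(volume.restrict Ω), 0 ≤ fderiv ℝ a x (x - x₀))
    {u : EuclideanSpace ℝ (Fin N) → ℝ}
    (hu : ContDiff ℝ (⊤ : ℕ∞) u) (hus : HasCompactSupport u) (huΩ : tsupport u ⊆ Ω) :
    IntegrableOn (fun x => fderiv ℝ a x (x - x₀) * ‖fderiv ℝ u x‖ ^ 2) Ω := by
  have hcomp : IsCompact (tsupport u) := hus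
  have h1 : IntegrableOn (fun x => fderiv ℝ a x (x - x₀)) (tsupport u) := by
    refine LocallyIntegrableOn.integrableOn_isCompact ?_ hcomp
    intro y hy
    obtain ⟨ρ, hρ, h⟩ := aux_loc hΩo x₀ ha hpos (huΩ hy)
    exact ⟨_, mem_nhdsWithin_of_mem_nhds (Metric.closedBall_mem_nhds y hρ), h⟩
  have hcont : Continuous (fun x => ‖fderiv ℝ u x‖ ^ 2) :=
    ((hu.continuous_fderiv (by simp)).norm).pow 2
  have h2 := h1.mul_continuousOn hcont.continuousOn hcomp
  refine IntegrableOn.of_forall_sdiff_eq_zero h2 hΩo.measurableSet ?_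
  intro x hx
  have : fderiv ℝ u x = 0 := by
    by_contra hne
    exact hx.2 (support_fderiv_subset ℝ hne)
  simp [this]

lemma aux_hardy {N : ℕ} (x₀ : EuclideanSpace ℝ (Fin N))
    {u : EuclideanSpace ℝ (Fin N) → ℝ}
    (hu : ContDiff ℝ (⊤ : ℕ∞) u) (hus : HasCompactSupport u) :
    Integrable (fun x => ‖x - x₀‖ ^ 2 * ‖fderiv ℝ u x‖ ^ 2) ∧
    Integrable (fun x => u x ^ 2) ∧
    (N : ℝ) ^ 2 * ∫ x, u x ^ 2 ≤ 4 * ∫ x, ‖x - x₀‖ ^ 2 * ‖fderiv ℝ u x‖ ^ 2 := by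
  have hcu : Continuous u := hu.continuous
  have hcd : Continuous (fderiv ℝ u) := hu.continuous_fderiv (by simp)
  have hdu : Differentiable ℝ u := hu.differentiable (by simp)
  have c0 : HasCompactSupport (fun x => u x ^ 2) :=
    hus.comp_left (g := fun s : ℝ => s ^ 2) (by simp)
  have c1 : HasCompactSupport (fun x => ‖fderiv ℝ u x‖ ^ 2) :=
    (hus.fderiv ℝ).comp_left
        (g := fun s : EuclideanSpace ℝ (Fin N) →L[ℝ] ℝ => ‖s‖ ^ 2) (by simp)
  have i0 : Integrable (fun x => u x ^ 2) :=
    (hcu.pow 2).integrable_of_hasCompactSupport c0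
  have i1 : Integrable (fun x => ‖x - x₀‖ ^ 2 * ‖fderiv ℝ u x‖ ^ 2) := by
    have hc : Continuous (fun x => ‖x - x₀‖ ^ 2 * ‖fderiv ℝ u x‖ ^ 2) := by fun_prop
    exact hc.integrable_of_hasCompactSupport (c1.mul_left (f := fun x => ‖x - x₀‖ ^ 2))
  have i2 : ∀ i : Fin N, Integrable (fun x => (x - x₀) i *
      (2 * u x * fderiv ℝ u x (EuclideanSpace.single i 1))) := by
    intro i
    have c2 : HasCompactSupport
        (fun x => 2 * u x * fderiv ℝ u x (EuclideanSpace.single i 1)) :=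
      (hus.mul_left (f := fun _ => (2 : ℝ))).mul_right
        (f' := fun x => fderiv ℝ u x (EuclideanSpace.single i 1))
    have hc : Continuous (fun x => (x - x₀) i *
        (2 * u x * fderiv ℝ u x (EuclideanSpace.single i 1))) := by fun_prop
    exact hc.integrable_of_hasCompactSupport (c2.mul_left (f := fun x => (x - x₀) i))
  have hfd : ∀ x w, fderiv ℝ (fun x => u x ^ 2) x w = 2 * u x * fderiv ℝ u x w := by
    intro x w
    have := ((hdu x).hasFDerivAt.pow 2).fderiv
    rw [this]
    simp
  have hfi : ∀ i : Fin N, ∀ x, fderiv ℝ (fun x : EuclideanSpace ℝ (Fin N) => (x - x₀) i) x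
      (EuclideanSpace.single i 1) = 1 := by
    intro i x
    have h : HasFDerivAt (fun x : EuclideanSpace ℝ (Fin N) => (x - x₀) i)
        (EuclideanSpace.proj i : EuclideanSpace ℝ (Fin N) →L[ℝ] ℝ) x :=
      (EuclideanSpace.proj i : EuclideanSpace ℝ (Fin N) →L[ℝ] ℝ).hasFDerivAt.comp x
        ((hasFDerivAt_id x).sub_const x₀)
    rw [h.fderiv]
    simp
  have hibp : ∀ i : Fin N, ∫ x, (x - x₀) i *
      (2 * u x * fderiv ℝ u x (EuclideanSpace.single i 1)) = - ∫ x, u x ^ 2 := by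
    intro i
    have := integral_mul_fderiv_eq_neg_fderiv_mul_of_integrable (μ := volume)
      (f := fun x : EuclideanSpace ℝ (Fin N) => (x - x₀) i) (g := fun x => u x ^ 2)
      (v := EuclideanSpace.single i 1)
      (by simpa only [hfi, one_mul] using i0)
      (by simpa only [hfd] using i2 i)
      (by
        have hc : Continuous (fun x => (x - x₀) i * u x ^ 2) := by fun_prop
        exact hc.integrable_of_hasCompactSupport (c0.mul_left (f := fun x => (x - x₀) i)))
      (fun x _ => by fun_prop) (fun x _ => by fun_prop)
    simpa only [hfi, hfd, one_mul] using this
  have hsum : ∀ x, ∑ i, (x - x₀) i * (2 * u x * fderiv ℝ u x (EuclideanSpace.single i 1))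
      = 2 * u x * fderiv ℝ u x (x - x₀) := by
    intro x
    have hx : x - x₀ = ∑ i, (x - x₀) i • EuclideanSpace.single i (1:ℝ) := by
      have := (EuclideanSpace.basisFun (Fin N) ℝ).sum_repr (x - x₀)
      simpa using this.symm
    conv_rhs => rw [hx]
    rw [map_sum, Finset.mul_sum]
    refine Finset.sum_congr rfl fun i _ => ?_
    rw [map_smul, smul_eq_mul]
    ring
  have hdiv : ∫ x, 2 * u x * fderiv ℝ u x (x - x₀) = - (N * ∫ x, u x ^ 2) := by
    simp_rw [← hsum]
    rw [integral_finsetSum _ (fun i _ => i2 i)]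
    rw [Finset.sum_congr rfl (fun i _ => hibp i)]
    simp
  have i3 : Integrable (fun x => 2 * u x * fderiv ℝ u x (x - x₀)) := by
    simp_rw [← hsum]
    exact integrable_finsetSum _ (fun i _ => i2 i)
  refine ⟨i1, i0, ?_⟩
  have hmono : ∫ x, (-(2 * N) * (2 * u x * fderiv ℝ u x (x - x₀)) - (N:ℝ) ^ 2 * u x ^ 2) ≤
      ∫ x, 4 * (‖x - x₀‖ ^ 2 * ‖fderiv ℝ u x‖ ^ 2) := by
    refine integral_mono ((i3.const_mul _).sub (i0.const_mul _)) (i1.const_mul _) ?_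
    intro x
    have h1 : (fderiv ℝ u x (x - x₀)) ^ 2 ≤ ‖x - x₀‖ ^ 2 * ‖fderiv ℝ u x‖ ^ 2 := by
      rw [← mul_pow, mul_comm, ← sq_abs]
      exact pow_le_pow_left₀ (abs_nonneg _) ((fderiv ℝ u x).le_opNorm _) 2
    have h2 := sq_nonneg (2 * fderiv ℝ u x (x - x₀) + N * u x)
    dsimp only
    nlinarith
  rw [integral_sub (i3.const_mul _) (i0.const_mul _), integral_const_mul, integral_const_mul,
    integral_const_mul, hdiv] at hmono
  linarith

lemma aux_half {N : ℕ} {Ω : Set (EuclideanSpace ℝ (Fin N))}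
    (hΩo : IsOpen Ω) (hΩb : Bornology.IsBounded Ω)
    (x₀ : EuclideanSpace ℝ (Fin N)) (hx₀ : x₀ ∈ Ω)
    {a : EuclideanSpace ℝ (Fin N) → ℝ} (ha : DifferentiableOn ℝ a Ω)
    {k A : ℝ} (hA : 0 < A) (hk0 : 0 < k) (hk2 : k ≤ 2)
    (hlowa : ∀ᵐ x ∂(volume.restrict Ω),
      k * A * ‖x - x₀‖ ^ k ≤ fderiv ℝ a x (x - x₀))
    {u : EuclideanSpace ℝ (Fin N) → ℝ}
    (hu : ContDiff ℝ (⊤ : ℕ∞) u) (hus : HasCompactSupport u) (huΩ : tsupport u ⊆ Ω) :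
    IntegrableOn (fun x => fderiv ℝ a x (x - x₀) * ‖fderiv ℝ u x‖ ^ 2) Ω ∧
    IntegrableOn (fun x => u x ^ 2) Ω ∧
    (N : ℝ) ^ 2 / 4 * (k * A * Metric.diam Ω ^ (k - 2)) * ∫ x in Ω, u x ^ 2 ≤
      ∫ x in Ω, fderiv ℝ a x (x - x₀) * ‖fderiv ℝ u x‖ ^ 2 := by
  have hpos : ∀ᵐ x ∂(volume.restrict Ω), 0 ≤ fderiv ℝ a x (x - x₀) := by
    filter_upwards [hlowa] with x hx
    exact le_trans (by positivity) hx
  have hint := aux_int hΩo x₀ ha hpos hu hus huΩ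
  obtain ⟨i1, i0, hH⟩ := aux_hardy x₀ hu hus
  refine ⟨hint, i0.integrableOn, ?_⟩
  have e0 : ∫ x in Ω, u x ^ 2 = ∫ x, u x ^ 2 := by
    refine setIntegral_eq_integral_of_forall_compl_eq_zero fun x hx => ?_
    rw [image_eq_zero_of_notMem_tsupport (fun h => hx (huΩ h))]
    simp
  have e1 : ∫ x in Ω, ‖x - x₀‖ ^ 2 * ‖fderiv ℝ u x‖ ^ 2 =
      ∫ x, ‖x - x₀‖ ^ 2 * ‖fderiv ℝ u x‖ ^ 2 := by
    refine setIntegral_eq_integral_of_forall_compl_eq_zero fun x hx => ?_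
    have : fderiv ℝ u x = 0 := by
      by_contra hne
      exact hx (huΩ (support_fderiv_subset ℝ hne))
    simp [this]
  rw [← e0, ← e1] at hH
  have hD : 0 ≤ k * A * Metric.diam Ω ^ (k - 2) := by
    have := Metric.diam_nonneg (s := Ω)
    positivity
  have hmono : ∫ x in Ω, (k * A * Metric.diam Ω ^ (k - 2)) * (‖x - x₀‖ ^ 2 * ‖fderiv ℝ u x‖ ^ 2) ≤
      ∫ x in Ω, fderiv ℝ a x (x - x₀) * ‖fderiv ℝ u x‖ ^ 2 := by
    refine integral_mono_ae (i1.integrableOn.const_mul _) hint ?_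
    filter_upwards [hlowa, ae_restrict_mem hΩo.measurableSet] with x hx hxΩ
    rw [← mul_assoc]
    refine mul_le_mul_of_nonneg_right (le_trans ?_ hx) (by positivity)
    rw [mul_assoc]
    refine mul_le_mul_of_nonneg_left ?_ (by positivity)
    have hle : ‖x - x₀‖ ≤ Metric.diam Ω := by
      rw [← dist_eq_norm]; exact Metric.dist_le_diam_of_mem hΩb hxΩ hx₀
    rcases (norm_nonneg (x - x₀)).eq_or_lt with h0 | h0
    · rw [← h0, Real.zero_rpow hk0.ne']; simp
    · calc Metric.diam Ω ^ (k - 2) * ‖x - x₀‖ ^ 2 ≤ ‖x - x₀‖ ^ (k - 2) * ‖x - x₀‖ ^ 2 := by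
            gcongr ?_ * _
            exact Real.rpow_le_rpow_of_nonpos h0 hle (by linarith)
        _ = ‖x - x₀‖ ^ k := by
            rw [← Real.rpow_natCast, ← Real.rpow_add h0]; norm_num
  rw [integral_const_mul] at hmono
  have := mul_le_mul_of_nonneg_left hH hD
  linarith

theorem stmt_19
    (N : ℕ) (hN : 1 ≤ N)
    (Ω : Set (EuclideanSpace ℝ (Fin N)))
    (hΩo : IsOpen Ω) (hΩb : Bornology.IsBounded Ω) (hΩne : Ω.Nonempty)
    (x₀ : EuclideanSpace ℝ (Fin N)) (hx₀ : x₀ ∈ Ω)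
    (a b : EuclideanSpace ℝ (Fin N) → ℝ)
    (ha : DifferentiableOn ℝ a Ω) (hb : DifferentiableOn ℝ b Ω)
    (k l A B : ℝ) (hA : 0 < A) (hB : 0 < B)
    (hk0 : 0 < k) (hk2 : k ≤ 2) (hl0 : 0 < l) (hl2 : l ≤ 2)
    (hlowa : ∀ᵐ x ∂(volume.restrict Ω),
      k * A * ‖x - x₀‖ ^ k ≤ fderiv ℝ a x (x - x₀))
    (hlowb : ∀ᵐ x ∂(volume.restrict Ω),
      l * B * ‖x - x₀‖ ^ l ≤ fderiv ℝ b x (x - x₀))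
    (u v : EuclideanSpace ℝ (Fin N) → ℝ)
    (hu : ContDiff ℝ (⊤ : ℕ∞) u) (hus : HasCompactSupport u) (huΩ : tsupport u ⊆ Ω)
    (hv : ContDiff ℝ (⊤ : ℕ∞) v) (hvs : HasCompactSupport v) (hvΩ : tsupport v ⊆ Ω)
    (huv : 0 < (∫ x in Ω, u x * v x)) :
    (1 / 4) * (∫ x in Ω,
          (fderiv ℝ a x (x - x₀) * ‖fderiv ℝ u x‖ ^ 2
            + fderiv ℝ b x (x - x₀) * ‖fderiv ℝ v x‖ ^ 2))
        / (∫ x in Ω, u x * v x)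
      ≥ ((N : ℝ) ^ 2 / 16) *
        min (k * A * Metric.diam Ω ^ (k - 2)) (l * B * Metric.diam Ω ^ (l - 2)) := by
  obtain ⟨I1, J1, H1⟩ := aux_half hΩo hΩb x₀ hx₀ ha hA hk0 hk2 hlowa hu hus huΩ
  obtain ⟨I2, J2, H2⟩ := aux_half hΩo hΩb x₀ hx₀ hb hB hl0 hl2 hlowb hv hvs hvΩ
  have hD := Metric.diam_nonneg (s := Ω)
  set p := k * A * Metric.diam Ω ^ (k - 2) with hp
  set q := l * B * Metric.diam Ω ^ (l - 2) with hq
  have hp0 : 0 ≤ p := by positivity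
  have hq0 : 0 ≤ q := by positivity
  rw [integral_add I1 I2, ge_iff_le, le_div_iff₀ huv]
  have hm0 : 0 ≤ min p q := le_min hp0 hq0
  have h1 : (N : ℝ) ^ 2 / 4 * min p q * ∫ x in Ω, u x ^ 2 ≤
      (N : ℝ) ^ 2 / 4 * p * ∫ x in Ω, u x ^ 2 := by
    have : 0 ≤ ∫ x in Ω, u x ^ 2 := integral_nonneg fun x => sq_nonneg _
    gcongr
    exact min_le_left _ _
  have h2 : (N : ℝ) ^ 2 / 4 * min p q * ∫ x in Ω, v x ^ 2 ≤
      (N : ℝ) ^ 2 / 4 * q * ∫ x in Ω, v x ^ 2 := by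
    have : 0 ≤ ∫ x in Ω, v x ^ 2 := integral_nonneg fun x => sq_nonneg _
    gcongr
    exact min_le_right _ _
  have h3 : ∫ x in Ω, u x * v x ≤ (∫ x in Ω, u x ^ 2) + ∫ x in Ω, v x ^ 2 := by
    rw [← integral_add J1 J2]
    have i5 : Integrable (fun x => u x * v x) :=
      (hu.continuous.mul hv.continuous).integrable_of_hasCompactSupport (hus.mul_right (f' := v))
    refine integral_mono i5.integrableOn (J1.add J2) fun x => ?_
    change u x * v x ≤ u x ^ 2 + v x ^ 2
    nlinarith [sq_nonneg (u x - v x), sq_nonneg (u x), sq_nonneg (v x)]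
  have h4 := mul_le_mul_of_nonneg_left h3 (by positivity : 0 ≤ (N : ℝ) ^ 2 / 4 * min p q)
  linarith
end
end
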